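/- Let G be a nonlocal game and G^proj its projection game, in which Alice receives a pair of questions (x,y) sampled from π and answers with a pair (a,b), while Bob receives one of x or y uniformly at random and answers with a single answer c; they win iff D(x,y,a,b) = 1 and c agrees with the corresponding coordinate of Alice's answer. Then the quantum value satisfies ω_q(G^proj) ≤ √((1 + ω_q(G))/2). -/

import Mathlib

open Matrix
open scoped ComplexOrder

/-- A (two-player, one-round) nonlocal game: a distribution on question pairs together with
a decision predicate. -/
structure NonlocalGame (IA IB OA OB : Type) where
  prob : IA → IB → ℝ
  D : IA → IB → OA → OB → Bool

/-- `p` is a probability distribution on question pairs. -/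
def IsDist {IA IB : Type} [Fintype IA] [Fintype IB] (p : IA → IB → ℝ) : Prop :=
  (∀ x y, 0 ≤ p x y) ∧ ∑ x, ∑ y, p x y = 1

/-- A POVM: positive semidefinite operators summing to the identity. -/
def IsPOVM {d : ℕ} {O : Type} [Fintype O] (A : O → Matrix (Fin d) (Fin d) ℂ) : Prop :=
  (∀ a, (A a).PosSemidef) ∧ ∑ a, A a = 1

/-- The winning probability of the quantum strategy given by POVMs `A`, `B` and the shared
state with coefficient matrix `M` (so that `⟨ψ|A⊗B|ψ⟩ = Tr(Mᴴ A M Bᵀ)`). -/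
noncomputable def winProb {IA IB OA OB : Type}
    [Fintype IA] [Fintype IB] [Fintype OA] [Fintype OB]
    (G : NonlocalGame IA IB OA OB) {dA dB : ℕ}
    (A : IA → OA → Matrix (Fin dA) (Fin dA) ℂ)
    (B : IB → OB → Matrix (Fin dB) (Fin dB) ℂ)
    (M : Matrix (Fin dA) (Fin dB) ℂ) : ℝ :=
  ∑ x, ∑ y, G.prob x y *
    ∑ a, ∑ b, if G.D x y a b then (Mᴴ * A x a * M * (B y b)ᵀ).trace.re else 0

/-- The quantum value `ω_q(G)`: the supremum of winning probabilities over all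
finite-dimensional quantum strategies. -/
noncomputable def qValue {IA IB OA OB : Type}
    [Fintype IA] [Fintype IB] [Fintype OA] [Fintype OB]
    (G : NonlocalGame IA IB OA OB) : ℝ :=
  sSup { w : ℝ | ∃ (dA dB : ℕ) (A : IA → OA → Matrix (Fin dA) (Fin dA) ℂ)
    (B : IB → OB → Matrix (Fin dB) (Fin dB) ℂ) (M : Matrix (Fin dA) (Fin dB) ℂ),
    (∀ x, IsPOVM (A x)) ∧ (∀ y, IsPOVM (B y)) ∧ (Mᴴ * M).trace = 1 ∧
    w = winProb G A B M }

/-- The projection game `G^proj`: Alice gets a pair `(x,y) ∼ π` and answers with a pair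
`(a,b)`; Bob gets one of the two questions, chosen uniformly (together with a flag saying
which coordinate), and answers with a single answer `c`; they win iff `D(x,y,a,b) = 1` and
`c` agrees with the corresponding coordinate of Alice's answer. -/
noncomputable def projGame {I O : Type} [DecidableEq I] [DecidableEq O]
    (G : NonlocalGame I I O O) : NonlocalGame (I × I) (I × Bool) (O × O) O where
  prob := fun q z =>
    if z.1 = (if z.2 then q.2 else q.1) then G.prob q.1 q.2 / 2 else 0
  D := fun q z a c =>
    G.D q.1 q.2 a.1 a.2 && decide (z.1 = if z.2 then q.2 else q.1) &&
      decide (c = if z.2 then a.2 else a.1)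

section Tr4
variable {n ι : Type*} [Fintype n]

/-- The real part of the trace of a product of four matrices. -/
noncomputable def tr4 (A B C D : Matrix n n ℂ) : ℝ := (A * B * C * D).trace.re

theorem tr4_rotate (A B C D : Matrix n n ℂ) : tr4 A B C D = tr4 B C D A := by
  unfold tr4
  rw [Matrix.trace_mul_comm (B * C * D) A]
  simp only [Matrix.mul_assoc]

theorem tr4_swap (A B C D : Matrix n n ℂ) : tr4 A B C D = tr4 C D A B := by
  rw [tr4_rotate, tr4_rotate]

theorem tr4_reverse {A B C D : Matrix n n ℂ} (hA : A.IsHermitian) (hB : B.IsHermitian)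
    (hC : C.IsHermitian) (hD : D.IsHermitian) : tr4 A B C D = tr4 D C B A := by
  unfold tr4
  have h : (D * C * B * A) = (A * B * C * D)ᴴ := by
    simp only [Matrix.conjTranspose_mul, hA.eq, hB.eq, hC.eq, hD.eq, Matrix.mul_assoc]
  rw [h, Matrix.trace_conjTranspose]
  simp

theorem tr4_swap_left {A B C D : Matrix n n ℂ} (hA : A.IsHermitian) (hB : B.IsHermitian)
    (hC : C.IsHermitian) (hD : D.IsHermitian) : tr4 A B C D = tr4 C B A D := by
  rw [tr4_reverse hA hB hC hD, tr4_rotate]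

theorem tr4_swap_right {A B C D : Matrix n n ℂ} (hA : A.IsHermitian) (hB : B.IsHermitian)
    (hC : C.IsHermitian) (hD : D.IsHermitian) : tr4 A B C D = tr4 A D C B := by
  rw [tr4_swap_left hA hB hC hD, tr4_swap]

theorem tr4_sub_first (A A' B C D : Matrix n n ℂ) :
    tr4 (A - A') B C D = tr4 A B C D - tr4 A' B C D := by
  simp [tr4, Matrix.sub_mul]

theorem tr4_sub_second (A B B' C D : Matrix n n ℂ) :
    tr4 A (B - B') C D = tr4 A B C D - tr4 A B' C D := by
  simp [tr4, Matrix.sub_mul, Matrix.mul_sub]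

theorem tr4_sub_third (A B C C' D : Matrix n n ℂ) :
    tr4 A B (C - C') D = tr4 A B C D - tr4 A B C' D := by
  simp [tr4, Matrix.sub_mul, Matrix.mul_sub]

theorem tr4_sub_fourth (A B C D D' : Matrix n n ℂ) :
    tr4 A B C (D - D') = tr4 A B C D - tr4 A B C D' := by
  simp [tr4, Matrix.mul_sub]

theorem tr4_add_second (A B B' C D : Matrix n n ℂ) :
    tr4 A (B + B') C D = tr4 A B C D + tr4 A B' C D := by
  simp [tr4, Matrix.add_mul, Matrix.mul_add]

theorem tr4_add_fourth (A B C D D' : Matrix n n ℂ) :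
    tr4 A B C (D + D') = tr4 A B C D + tr4 A B C D' := by
  simp [tr4, Matrix.mul_add]

theorem tr4_smul_second (r : ℝ) (A B C D : Matrix n n ℂ) :
    tr4 A (r • B) C D = r * tr4 A B C D := by
  simp [tr4]

theorem tr4_smul_fourth (r : ℝ) (A B C D : Matrix n n ℂ) :
    tr4 A B C (r • D) = r * tr4 A B C D := by
  simp [tr4]

theorem tr4_sum_first (s : Finset ι) (A : ι → Matrix n n ℂ) (B C D : Matrix n n ℂ) :
    tr4 (∑ i ∈ s, A i) B C D = ∑ i ∈ s, tr4 (A i) B C D := by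
  simp [tr4, Matrix.sum_mul, Matrix.trace_sum]

theorem tr4_sum_second (s : Finset ι) (A : Matrix n n ℂ) (B : ι → Matrix n n ℂ)
    (C D : Matrix n n ℂ) : tr4 A (∑ i ∈ s, B i) C D = ∑ i ∈ s, tr4 A (B i) C D := by
  simp [tr4, Matrix.sum_mul, Matrix.mul_sum, Matrix.trace_sum]

theorem tr4_sum_third (s : Finset ι) (A B : Matrix n n ℂ) (C : ι → Matrix n n ℂ)
    (D : Matrix n n ℂ) : tr4 A B (∑ i ∈ s, C i) D = ∑ i ∈ s, tr4 A B (C i) D := by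
  simp [tr4, Matrix.sum_mul, Matrix.mul_sum, Matrix.trace_sum]

theorem tr4_sum_fourth (s : Finset ι) (A B C : Matrix n n ℂ) (D : ι → Matrix n n ℂ) :
    tr4 A B C (∑ i ∈ s, D i) = ∑ i ∈ s, tr4 A B C (D i) := by
  simp [tr4, Matrix.mul_sum, Matrix.trace_sum]

open scoped MatrixOrder in
theorem Matrix.PosSemidef.trace_mul_re_nonneg {A B : Matrix n n ℂ}
    (hA : A.PosSemidef) (hB : B.PosSemidef) : 0 ≤ (A * B).trace.re := by
  classical
  obtain ⟨C, rfl⟩ := CStarAlgebra.nonneg_iff_eq_star_mul_self.mp hA.nonneg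
  rw [Matrix.mul_assoc, Matrix.trace_mul_comm]
  exact (Complex.nonneg_iff.mp (hB.mul_mul_conjTranspose_same C).trace_nonneg).1

theorem tr4_nonneg_of_odd {P Y Q : Matrix n n ℂ} (hP : P.PosSemidef) (hQ : Q.PosSemidef)
    (hY : Y.IsHermitian) : 0 ≤ tr4 P Y Q Y := by
  have h := hQ.mul_mul_conjTranspose_same Y
  rw [hY.eq] at h
  simpa [tr4, Matrix.mul_assoc] using hP.trace_mul_re_nonneg h

theorem tr4_nonneg_of_even {P Y Z : Matrix n n ℂ} (hY : Y.PosSemidef) (hZ : Z.PosSemidef)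
    (hP : P.IsHermitian) : 0 ≤ tr4 P Y P Z := by
  rw [tr4_rotate]
  exact tr4_nonneg_of_odd hY hZ hP

end Tr4

theorem posSemidef_sum_sub {n ι : Type*} [Fintype ι] [DecidableEq ι] {X : ι → Matrix n n ℂ}
    (hX : ∀ i, (X i).PosSemidef) (j : ι) : (∑ i, X i - X j).PosSemidef := by
  rw [← Finset.sum_erase_eq_sub (Finset.mem_univ j)]
  exact Matrix.posSemidef_sum _ fun i _ => hX i

section TraceInequalities
variable {n O : Type*} [Fintype n] [DecidableEq n] [Fintype O] [DecidableEq O]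

theorem sum_tr4_le_of_sum_eq_one {P X : O → Matrix n n ℂ} {τ : Matrix n n ℂ}
    (hP : ∀ a, (P a).PosSemidef) (hP1 : ∑ a, P a = 1)
    (hX : ∀ a, (X a).PosSemidef) (hτ : ∑ a, X a = τ) :
    ∑ a, (tr4 (P a) (X a) 1 (X a) + tr4 (P a) (X a) (P a) (τ - X a)) ≤ tr4 1 τ 1 τ := by
  have hτp : τ.PosSemidef := hτ ▸ Matrix.posSemidef_sum _ fun i _ => hX i
  have hcell : ∀ a, 2 * (tr4 (P a) (X a) 1 (X a) + tr4 (P a) (X a) (P a) (τ - X a)) ≤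
      tr4 1 (X a) 1 (X a) + tr4 (P a) τ (P a) τ := by
    intro a
    have h1 := tr4_nonneg_of_even (hX a) (hX a) (Matrix.isHermitian_one.sub (hP a).1)
    have h2 := tr4_nonneg_of_odd (hP a) (hP a) (hτp.1.sub (hX a).1)
    have h3 := tr4_swap 1 (X a) (P a) (X a)
    have h4 := tr4_swap (P a) τ (P a) (X a)
    simp only [tr4_sub_first, tr4_sub_second, tr4_sub_third, tr4_sub_fourth] at h1 h2 ⊢
    linarith
  have hX2 : ∑ a, tr4 1 (X a) 1 (X a) ≤ tr4 1 τ 1 τ := by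
    calc ∑ a, tr4 1 (X a) 1 (X a) ≤ ∑ a, tr4 1 (X a) 1 τ := by
          refine Finset.sum_le_sum fun a _ => ?_
          have := tr4_nonneg_of_even (hX a) (hτ ▸ posSemidef_sum_sub hX a)
            Matrix.isHermitian_one
          rw [tr4_sub_fourth] at this
          linarith
      _ = tr4 1 τ 1 τ := by rw [← tr4_sum_second, hτ]
  have hP2 : ∑ a, tr4 (P a) τ (P a) τ ≤ tr4 1 τ 1 τ := by
    calc ∑ a, tr4 (P a) τ (P a) τ ≤ ∑ a, tr4 (P a) τ 1 τ := by
          refine Finset.sum_le_sum fun a _ => ?_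
          have := tr4_nonneg_of_odd (hP a) (hP1 ▸ posSemidef_sum_sub hP a) hτp.1
          rw [tr4_sub_third] at this
          linarith
      _ = tr4 1 τ 1 τ := by rw [← tr4_sum_first, hP1]
  have := Finset.sum_le_sum fun a (_ : a ∈ Finset.univ) => hcell a
  simp only [← Finset.mul_sum, Finset.sum_add_distrib] at this ⊢
  linarith

theorem sum_tr4_inclusion_exclusion_le {P Q : O → Matrix n n ℂ} {X : O → O → Matrix n n ℂ}
    {τ : Matrix n n ℂ}
    (hP : ∀ a, (P a).PosSemidef) (hP1 : ∑ a, P a = 1)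
    (hQ : ∀ b, (Q b).PosSemidef) (hQ1 : ∑ b, Q b = 1)
    (hX : ∀ a b, (X a b).PosSemidef) (hτ : ∑ a, ∑ b, X a b = τ) :
    ∑ c, ∑ d, (tr4 (P c) (X c d) (Q d) (X c d) +
      tr4 (P c) (∑ b, X c b + ∑ a, X a d - X c d) (Q d) (∑ b, X c b + ∑ a, X a d - X c d)) ≤
      2 * tr4 1 τ 1 τ := by
  set R : O → Matrix n n ℂ := fun a => ∑ b, X a b with hR
  set S : O → Matrix n n ℂ := fun b => ∑ a, X a b with hS
  have hRp : ∀ a, (R a).PosSemidef := fun a => Matrix.posSemidef_sum _ fun b _ => hX a b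
  have hSp : ∀ b, (S b).PosSemidef := fun b => Matrix.posSemidef_sum _ fun a _ => hX a b
  have hRs : ∑ a, R a = τ := hτ
  have hSs : ∑ b, S b = τ := by rw [← hτ, Finset.sum_comm]
  have hY : ∀ c d, (R c - X c d).PosSemidef := fun c d => posSemidef_sum_sub (hX c) d
  have hY' : ∀ c d, (S d - X c d).PosSemidef :=
    fun c d => posSemidef_sum_sub (fun a => hX a d) c
  have hcell : ∀ c d, tr4 (P c) (X c d) (Q d) (X c d) +
      tr4 (P c) (R c + S d - X c d) (Q d) (R c + S d - X c d) ≤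
      (tr4 (P c) (R c) (Q d) (R c) + tr4 (P c) (R c) (P c) (S d - X c d)) +
      (tr4 (P c) (S d) (Q d) (S d) + tr4 (Q d) (S d) (Q d) (R c - X c d)) := by
    intro c d
    have h1 := tr4_nonneg_of_even (hY c d) (hY' c d) ((hP c).1.sub (hQ d).1)
    have h2 := tr4_nonneg_of_even (hX c d) (hY' c d) (hP c).1
    have h3 := tr4_nonneg_of_even (hY c d) (hX c d) (hQ d).1
    have e1 := tr4_swap_left (hP c).1 (hY c d).1 (hQ d).1 (hY' c d).1
    have e2 := tr4_swap_right (hP c).1 (hRp c).1 (hQ d).1 (hSp d).1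
    have e3 := tr4_swap_right (hP c).1 (hRp c).1 (hQ d).1 (hX c d).1
    have e4 := tr4_swap_right (hP c).1 (hSp d).1 (hQ d).1 (hX c d).1
    have e5 := tr4_swap (Q d) (R c) (Q d) (S d)
    have e6 := tr4_swap (Q d) (X c d) (Q d) (S d)
    have e7 := tr4_swap (Q d) (R c) (Q d) (X c d)
    simp only [tr4_sub_first, tr4_sub_second, tr4_sub_third, tr4_sub_fourth, tr4_add_second,
      tr4_add_fourth] at h1 h2 h3 e1 ⊢
    linarith
  have hPs := sum_tr4_le_of_sum_eq_one hP hP1 hRp hRs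
  have hQs := sum_tr4_le_of_sum_eq_one hQ hQ1 hSp hSs
  have hPe : ∑ c, ∑ d, (tr4 (P c) (R c) (Q d) (R c) + tr4 (P c) (R c) (P c) (S d - X c d)) =
      ∑ c, (tr4 (P c) (R c) 1 (R c) + tr4 (P c) (R c) (P c) (τ - R c)) := by
    refine Finset.sum_congr rfl fun c _ => ?_
    rw [Finset.sum_add_distrib, ← tr4_sum_third, ← tr4_sum_fourth, hQ1, Finset.sum_sub_distrib,
      hSs]
  have hQe : ∑ c, ∑ d, (tr4 (P c) (S d) (Q d) (S d) + tr4 (Q d) (S d) (Q d) (R c - X c d)) =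
      ∑ d, (tr4 (Q d) (S d) 1 (S d) + tr4 (Q d) (S d) (Q d) (τ - S d)) := by
    rw [Finset.sum_comm]
    refine Finset.sum_congr rfl fun d _ => ?_
    rw [Finset.sum_add_distrib, ← tr4_sum_first, ← tr4_sum_fourth, hP1, Finset.sum_sub_distrib,
      hRs, tr4_swap]
  calc _ ≤ ∑ c, ∑ d, ((tr4 (P c) (R c) (Q d) (R c) + tr4 (P c) (R c) (P c) (S d - X c d)) +
      (tr4 (P c) (S d) (Q d) (S d) + tr4 (Q d) (S d) (Q d) (R c - X c d))) :=
        Finset.sum_le_sum fun c _ => Finset.sum_le_sum fun d _ => hcell c d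
    _ ≤ _ := by
        simp only [Finset.sum_add_distrib (s := Finset.univ)] at hPe hQe hPs hQs ⊢
        linarith

theorem two_mul_sum_tr4_le {P Q : O → Matrix n n ℂ} {X : O → O → Matrix n n ℂ}
    {σ : Matrix n n ℂ} {D : O → O → Bool}
    (hP : ∀ a, (P a).PosSemidef) (hP1 : ∑ a, P a = 1)
    (hQ : ∀ b, (Q b).PosSemidef) (hQ1 : ∑ b, Q b = 1)
    (hX : ∀ a b, (X a b).PosSemidef) (hXD : ∀ a b, D a b = false → X a b = 0)
    (hσ : σ.IsHermitian) (hσ1 : tr4 1 σ 1 σ = 1)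
    (hτ : tr4 1 (∑ a, ∑ b, X a b) 1 (∑ a, ∑ b, X a b) ≤ 1) (μ : ℝ) :
    2 * μ * ∑ a, ∑ b, (tr4 (P a) σ 1 (X a b) + tr4 1 σ (Q b) (X a b)) ≤
      1 + ∑ a, ∑ b, (if D a b then tr4 (P a) σ (Q b) σ else 0) + 2 * μ ^ 2 := by
  have hK := sum_tr4_inclusion_exclusion_le hP hP1 hQ hQ1 hX rfl
  set R : O → Matrix n n ℂ := fun a => ∑ b, X a b with hR
  set S : O → Matrix n n ℂ := fun b => ∑ a, X a b with hS
  have hRp : ∀ a, (R a).PosSemidef := fun a => Matrix.posSemidef_sum _ fun b _ => hX a b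
  have hSp : ∀ b, (S b).PosSemidef := fun b => Matrix.posSemidef_sum _ fun a _ => hX a b
  have expand : ∀ (a b : O) (Z : Matrix n n ℂ), Z.IsHermitian →
      0 ≤ tr4 (P a) σ (Q b) σ - 2 * μ * tr4 (P a) σ (Q b) Z + μ ^ 2 * tr4 (P a) Z (Q b) Z := by
    intro a b Z hZ
    have h := tr4_nonneg_of_odd (hP a) (hQ b) (hσ.sub (hZ.smul (IsSelfAdjoint.all μ)))
    have e := tr4_swap_right (hP a).1 hZ (hQ b).1 hσ
    simp only [tr4_sub_second, tr4_sub_fourth, tr4_smul_second, tr4_smul_fourth, e] at h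
    linarith
  have h1 : ∀ a b, 0 ≤ (if D a b then tr4 (P a) σ (Q b) σ else 0) -
      2 * μ * tr4 (P a) σ (Q b) (X a b) + μ ^ 2 * tr4 (P a) (X a b) (Q b) (X a b) := by
    intro a b
    cases h : D a b
    · simp [hXD a b h, tr4]
    · simpa using expand a b (X a b) (hX a b).1
  have h2 := fun a b => expand a b (R a + S b - X a b)
    (((hRp a).1.add (hSp b).1).sub (hX a b).1)
  have h12 : ∀ a b, 2 * μ * (tr4 (P a) σ (Q b) (R a) + tr4 (P a) σ (Q b) (S b)) ≤
      (if D a b then tr4 (P a) σ (Q b) σ else 0) + tr4 (P a) σ (Q b) σ +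
      μ ^ 2 * (tr4 (P a) (X a b) (Q b) (X a b) +
        tr4 (P a) (R a + S b - X a b) (Q b) (R a + S b - X a b)) := by
    intro a b
    have h1 := h1 a b
    have h2 := h2 a b
    have e : tr4 (P a) σ (Q b) (R a + S b - X a b) = tr4 (P a) σ (Q b) (R a) +
      tr4 (P a) σ (Q b) (S b) - tr4 (P a) σ (Q b) (X a b) := by
      rw [tr4_sub_fourth, tr4_add_fourth]
    rw [e] at h2
    linarith
  have hsum := Finset.sum_le_sum fun a (_ : a ∈ Finset.univ) =>
    Finset.sum_le_sum fun b (_ : b ∈ Finset.univ) => h12 a b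
  simp only [Finset.sum_add_distrib (s := Finset.univ), ← Finset.mul_sum] at hsum hK ⊢
  have eσ : ∑ a, ∑ b, tr4 (P a) σ (Q b) σ = 1 := by
    simp only [← tr4_sum_third, hQ1, ← tr4_sum_first, hP1, hσ1]
  have eR : ∑ a, ∑ b, tr4 (P a) σ (Q b) (R a) = ∑ a, ∑ b, tr4 (P a) σ 1 (X a b) := by
    simp only [← tr4_sum_third, hQ1, hR, ← tr4_sum_fourth]
  have eS : ∑ a, ∑ b, tr4 (P a) σ (Q b) (S b) = ∑ a, ∑ b, tr4 1 σ (Q b) (X a b) := by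
    rw [Finset.sum_comm, Finset.sum_comm (f := fun a b => tr4 1 σ (Q b) (X a b))]
    simp only [← tr4_sum_first, hP1, hS, ← tr4_sum_fourth]
  rw [eσ, eR, eS] at hsum
  nlinarith [sq_nonneg μ]

end TraceInequalities

section Lyapunov
variable {n ι : Type*} [Fintype n] [DecidableEq n]

/-- A Hermitian solution of a Lyapunov equation with positive semidefinite right-hand side is
positive semidefinite, provided its kernel contains that of the coefficient. -/
theorem Matrix.IsHermitian.posSemidef_of_lyapunov {X N : Matrix n n ℂ} {s : n → ℝ}
    (hX : X.IsHermitian) (hN : N.PosSemidef) (hs : ∀ j, 0 ≤ s j)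
    (h0 : ∀ j k, s j = 0 → X j k = 0)
    (h : X * diagonal (fun j => (s j : ℂ)) + diagonal (fun j => (s j : ℂ)) * X = N) :
    X.PosSemidef := by
  rw [hX.posSemidef_iff_eigenvalues_nonneg]
  intro i
  by_contra! hlam
  simp only [Pi.zero_apply] at hlam
  set lam := hX.eigenvalues i
  set v : n → ℂ := (hX.eigenvectorBasis i).ofLp
  have hXv : X *ᵥ v = lam • v := hX.mulVec_eigenvectorBasis i
  have hv0 : v ≠ 0 := fun h0 => hX.eigenvectorBasis.toBasis.ne_zero i
    (by ext j; simpa using congrFun h0 j)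
  have hvj : ∀ j, s j = 0 → v j = 0 := by
    intro j hj
    have h1 := congrFun hXv j
    simp only [Matrix.mulVec, dotProduct, h0 j _ hj, zero_mul, Finset.sum_const_zero,
      Pi.smul_apply, Complex.real_smul] at h1
    simpa [hlam.ne] using h1.symm
  have hvX : star v ᵥ* X = lam • star v := by
    have := congrArg star hXv
    rw [Matrix.star_mulVec, hX.eq] at this
    rw [this]; ext j; simp
  have hq : (star v ⬝ᵥ N *ᵥ v).re = 2 * lam * ∑ j, s j * Complex.normSq (v j) := by
    rw [← h, Matrix.add_mulVec, dotProduct_add, ← Matrix.mulVec_mulVec, ← Matrix.mulVec_mulVec,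
      Matrix.dotProduct_mulVec, hvX, hXv, Matrix.mulVec_smul, smul_dotProduct, dotProduct_smul]
    have : star v ⬝ᵥ diagonal (fun j => (s j : ℂ)) *ᵥ v =
        ((∑ j, s j * Complex.normSq (v j) : ℝ) : ℂ) := by
      simp only [dotProduct, Matrix.mulVec_diagonal, Complex.ofReal_sum, Complex.ofReal_mul,
        Complex.normSq_eq_conj_mul_self, Pi.star_apply, RCLike.star_def]
      exact Finset.sum_congr rfl fun j _ => by ring
    rw [this]
    simp
    ring
  have hpos : 0 < ∑ j, s j * Complex.normSq (v j) := by
    obtain ⟨j, hj⟩ := Function.ne_iff.mp hv0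
    refine Finset.sum_pos' (fun k _ => mul_nonneg (hs k) (Complex.normSq_nonneg _))
      ⟨j, Finset.mem_univ _, mul_pos ?_ (Complex.normSq_pos.mpr hj)⟩
    exact (hs j).lt_of_ne fun h => hj (hvj j h.symm)
  have := (Complex.nonneg_iff.mp (hN.dotProduct_mulVec_nonneg v)).1
  rw [hq] at this
  nlinarith

theorem exists_lyapunov_family_diagonal [Fintype ι] {N : ι → Matrix n n ℂ} {s : n → ℝ}
    (hs : ∀ j, 0 ≤ s j) (hN : ∀ i, (N i).PosSemidef)
    (hsum : ∑ i, N i = diagonal (fun j => (s j : ℂ)) * diagonal (fun j => (s j : ℂ))) :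
    ∃ X : ι → Matrix n n ℂ, (∀ i, (X i).PosSemidef) ∧
      ∑ i, X i = diagonal (fun j => (s j : ℂ)) ∧
      ∀ i, X i * diagonal (fun j => (s j : ℂ)) + diagonal (fun j => (s j : ℂ)) * X i =
        (2 : ℝ) • N i := by
  have hentry : ∀ j k, ∑ i, N i j k = if j = k then (s j : ℂ) * s j else 0 := by
    intro j k
    have := congrFun (congrFun hsum j) k
    rw [Matrix.sum_apply, Matrix.diagonal_mul_diagonal, Matrix.diagonal_apply] at this
    exact this
  have hcol : ∀ i j k, s j = 0 → N i k j = 0 := by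
    intro i j k hj
    have hd : N i j j = 0 := by
      have h1 := hentry j j
      rw [if_pos rfl, hj] at h1
      simp only [Complex.ofReal_zero, mul_zero] at h1
      exact (Finset.sum_eq_zero_iff_of_nonneg fun i _ => (hN i).diag_nonneg).mp h1 i
        (Finset.mem_univ i)
    have h2 := ((hN i).dotProduct_mulVec_zero_iff (Pi.single j 1)).mp (by
      simp [hd])
    simpa [Matrix.mulVec_single_one] using congrFun h2 k
  have hrow : ∀ i j k, s j = 0 → N i j k = 0 := by
    intro i j k hj
    rw [← (hN i).1.apply j k, hcol i j k hj, star_zero]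
  let X : ι → Matrix n n ℂ := fun i => Matrix.of fun j k => 2 * N i j k / ((s j : ℂ) + s k)
  have hXe : ∀ i, X i * diagonal (fun j => (s j : ℂ)) + diagonal (fun j => (s j : ℂ)) * X i =
      (2 : ℝ) • N i := by
    intro i
    ext j k
    simp only [X, Matrix.add_apply, Matrix.mul_diagonal, Matrix.diagonal_mul, Matrix.of_apply,
      Matrix.smul_apply, Complex.real_smul]
    by_cases h : s j + s k = 0
    · have hj : s j = 0 := by linarith [hs j, hs k]
      simp [hrow i j k hj]
    · have h' : (s j : ℂ) + s k ≠ 0 := by exact_mod_cast h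
      field_simp
      push_cast
      ring
  refine ⟨X, fun i => ?_, ?_, hXe⟩
  · refine Matrix.IsHermitian.posSemidef_of_lyapunov ?_ ((hN i).smul zero_le_two) hs ?_ (hXe i)
    · ext j k
      simp only [X, Matrix.conjTranspose_apply, Matrix.of_apply, star_div₀, star_mul', star_add,
        (hN i).1.apply, RCLike.star_def, Complex.conj_ofReal,
        map_ofNat, add_comm]
    · intro j k hj
      simp [X, hrow i j k hj]
  · ext j k
    simp only [X, Matrix.sum_apply, Matrix.of_apply, ← Finset.sum_div, ← Finset.mul_sum, hentry,
      Matrix.diagonal_apply]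
    split_ifs with h
    · subst h
      by_cases h0 : s j = 0
      · simp [h0]
      · have : (s j : ℂ) ≠ 0 := by exact_mod_cast h0
        field_simp
        ring
    · simp

theorem exists_lyapunov_family [Fintype ι] {N : ι → Matrix n n ℂ} {σ : Matrix n n ℂ}
    (hσ : σ.PosSemidef) (hN : ∀ i, (N i).PosSemidef) (hsum : ∑ i, N i = σ * σ) :
    ∃ X : ι → Matrix n n ℂ, (∀ i, (X i).PosSemidef) ∧ ∑ i, X i = σ ∧
      ∀ i, X i * σ + σ * X i = (2 : ℝ) • N i := by
  set U : Matrix n n ℂ := hσ.1.eigenvectorUnitary.1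
  set S : Matrix n n ℂ := diagonal (fun j => (hσ.1.eigenvalues j : ℂ)) with hS
  have hUU : U * Uᴴ = 1 := Unitary.coe_mul_star_self hσ.1.eigenvectorUnitary
  have hUU' : Uᴴ * U = 1 := Unitary.coe_star_mul_self hσ.1.eigenvectorUnitary
  have hspec : σ = U * S * Uᴴ := by
    have := hσ.1.spectral_theorem
    rwa [Unitary.conjStarAlgAut_apply] at this
  have cancel : ∀ A : Matrix n n ℂ, Uᴴ * (U * A) = A := fun A => by
    rw [← Matrix.mul_assoc, hUU', Matrix.one_mul]
  have cancel' : ∀ A : Matrix n n ℂ, U * (Uᴴ * A) = A := fun A => by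
    rw [← Matrix.mul_assoc, hUU, Matrix.one_mul]
  obtain ⟨X, hX, hXs, hXe⟩ := exists_lyapunov_family_diagonal (N := fun i => Uᴴ * N i * U)
    (s := hσ.1.eigenvalues) hσ.eigenvalues_nonneg
    (fun i => (hN i).conjTranspose_mul_mul_same U) (by
      rw [← Finset.sum_mul, ← Finset.mul_sum, hsum, ← hS]
      conv_lhs => rw [hspec]
      simp only [Matrix.mul_assoc, cancel, hUU', Matrix.mul_one])
  refine ⟨fun i => U * X i * Uᴴ, fun i => (hX i).mul_mul_conjTranspose_same U, ?_, fun i => ?_⟩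
  · rw [← Finset.sum_mul, ← Finset.mul_sum, hXs]
    exact hspec.symm
  · have h := congrArg (fun A => U * A * Uᴴ) (hXe i)
    conv_lhs => rw [hspec]
    simp only [Matrix.mul_add, Matrix.add_mul, Matrix.mul_assoc, cancel, cancel', hUU,
      Matrix.mul_one, Matrix.mul_smul, Matrix.smul_mul] at h ⊢
    exact h

theorem tr4_of_lyapunov {P σ X N : Matrix n n ℂ} (hP : P.IsHermitian) (hσ : σ.IsHermitian)
    (hX : X.IsHermitian) (h : X * σ + σ * X = (2 : ℝ) • N) : tr4 P σ 1 X = (P * N).trace.re := by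
  have e := tr4_reverse hP hσ Matrix.isHermitian_one hX
  have h1 : ((P * (X * σ + σ * X)).trace).re = 2 * (P * N).trace.re := by
    rw [h]; simp
  have h2 : tr4 X 1 σ P = (P * (X * σ)).trace.re := by
    simp [tr4, Matrix.trace_mul_comm P, Matrix.mul_assoc]
  have h3 : tr4 P σ 1 X = (P * (σ * X)).trace.re := by simp [tr4, Matrix.mul_assoc]
  rw [Matrix.mul_add, Matrix.trace_add, Complex.add_re] at h1
  linarith

end Lyapunov

theorem two_mul_sum_trace_le {n O : Type*} [Fintype n] [DecidableEq n] [Fintype O]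
    [DecidableEq O] {P Q : O → Matrix n n ℂ} {N : O → O → Matrix n n ℂ} {σ : Matrix n n ℂ}
    {D : O → O → Bool}
    (hP : ∀ a, (P a).PosSemidef) (hP1 : ∑ a, P a = 1)
    (hQ : ∀ b, (Q b).PosSemidef) (hQ1 : ∑ b, Q b = 1)
    (hσ : σ.PosSemidef) (hσ1 : tr4 1 σ 1 σ = 1)
    (hN : ∀ a b, (N a b).PosSemidef) (hsum : ∑ a, ∑ b, N a b = σ * σ) (μ : ℝ) :
    2 * μ * ∑ a, ∑ b,
        (if D a b then (P a * N a b).trace.re + (Q b * N a b).trace.re else 0) ≤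
      1 + ∑ a, ∑ b, (if D a b then tr4 (P a) σ (Q b) σ else 0) + 2 * μ ^ 2 := by
  obtain ⟨X, hX, hXs, hXe⟩ := exists_lyapunov_family (N := fun i : O × O => N i.1 i.2) hσ
    (fun i => hN i.1 i.2) (by rw [Fintype.sum_prod_type, hsum])
  have hY : ∀ a b, (if D a b then X (a, b) else 0).PosSemidef := by
    intro a b
    split_ifs
    exacts [hX _, .zero]
  have hZ : ∀ a b, (if D a b then 0 else X (a, b)).PosSemidef := by
    intro a b
    split_ifs
    exacts [.zero, hX _]
  set τ := ∑ a, ∑ b, (if D a b then X (a, b) else 0) with hτ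
  have hτp : τ.PosSemidef :=
    Matrix.posSemidef_sum _ fun a _ => Matrix.posSemidef_sum _ fun b _ => hY a b
  have hsub : (σ - τ).PosSemidef := by
    have : σ - τ = ∑ a, ∑ b, (if D a b then 0 else X (a, b)) := by
      rw [← hXs, hτ, Fintype.sum_prod_type, ← Finset.sum_sub_distrib]
      refine Finset.sum_congr rfl fun a _ => ?_
      rw [← Finset.sum_sub_distrib]
      refine Finset.sum_congr rfl fun b _ => ?_
      split_ifs <;> simp
    rw [this]
    exact Matrix.posSemidef_sum _ fun a _ => Matrix.posSemidef_sum _ fun b _ => hZ a b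
  have hτ1 : tr4 1 τ 1 τ ≤ 1 := by
    have h1 := tr4_nonneg_of_even hτp hsub Matrix.isHermitian_one
    have h2 := tr4_nonneg_of_even hσ hsub Matrix.isHermitian_one
    have h3 := tr4_swap 1 τ 1 σ
    simp only [tr4_sub_fourth] at h1 h2
    linarith
  have key := two_mul_sum_tr4_le (D := D) hP hP1 hQ hQ1 hY
    (fun a b h => by simp [h]) hσ.1 hσ1 hτ1 μ
  refine le_trans (le_of_eq ?_) key
  congr 1
  refine Finset.sum_congr rfl fun a _ => Finset.sum_congr rfl fun b _ => ?_
  split_ifs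
  · rw [tr4_swap_left Matrix.isHermitian_one hσ.1 (hQ b).1 (hX (a, b)).1,
      tr4_of_lyapunov (hP a).1 hσ.1 (hX (a, b)).1 (hXe (a, b)),
      tr4_of_lyapunov (hQ b).1 hσ.1 (hX (a, b)).1 (hXe (a, b))]
  · simp [tr4]

theorem winProb_le_one {IA IB OA OB : Type} [Fintype IA] [Fintype IB] [Fintype OA] [Fintype OB]
    {G : NonlocalGame IA IB OA OB} (hG : IsDist G.prob) {dA dB : ℕ}
    {A : IA → OA → Matrix (Fin dA) (Fin dA) ℂ} {B : IB → OB → Matrix (Fin dB) (Fin dB) ℂ}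
    {M : Matrix (Fin dA) (Fin dB) ℂ} (hA : ∀ x, IsPOVM (A x)) (hB : ∀ y, IsPOVM (B y))
    (hM : (Mᴴ * M).trace = 1) : winProb G A B M ≤ 1 := by
  have hcell : ∀ x y, ∑ a, ∑ b,
      (if G.D x y a b then (Mᴴ * A x a * M * (B y b)ᵀ).trace.re else 0) ≤ 1 := by
    intro x y
    calc _ ≤ ∑ a, ∑ b, (Mᴴ * A x a * M * (B y b)ᵀ).trace.re := by
          refine Finset.sum_le_sum fun a _ => Finset.sum_le_sum fun b _ => ?_
          split_ifs
          · exact le_rfl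
          · exact (((hA x).1 a).conjTranspose_mul_mul_same M).trace_mul_re_nonneg
              ((hB y).1 b).transpose
      _ = 1 := by
          simp only [← Complex.re_sum, ← Matrix.trace_sum, ← Matrix.mul_sum, ← Matrix.sum_mul,
            ← Matrix.transpose_sum, (hA x).2, (hB y).2]
          simp [hM]
  calc winProb G A B M ≤ ∑ x, ∑ y, G.prob x y * 1 :=
        Finset.sum_le_sum fun x _ => Finset.sum_le_sum fun y _ =>
          mul_le_mul_of_nonneg_left (hcell x y) (hG.1 x y)
    _ = 1 := by simpa using hG.2

theorem winProb_le_qValue {IA IB OA OB : Type} [Fintype IA] [Fintype IB] [Fintype OA]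
    [Fintype OB] {G : NonlocalGame IA IB OA OB} (hG : IsDist G.prob) {dA dB : ℕ}
    {A : IA → OA → Matrix (Fin dA) (Fin dA) ℂ} {B : IB → OB → Matrix (Fin dB) (Fin dB) ℂ}
    {M : Matrix (Fin dA) (Fin dB) ℂ} (hA : ∀ x, IsPOVM (A x)) (hB : ∀ y, IsPOVM (B y))
    (hM : (Mᴴ * M).trace = 1) : winProb G A B M ≤ qValue G := by
  refine le_csSup ⟨1, ?_⟩ ⟨dA, dB, A, B, M, hA, hB, hM, rfl⟩
  rintro w ⟨dA, dB, A, B, M, hA, hB, hM, rfl⟩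
  exact winProb_le_one hG hA hB hM

theorem IsPOVM.transpose {d : ℕ} {O : Type} [Fintype O] {A : O → Matrix (Fin d) (Fin d) ℂ}
    (hA : IsPOVM A) : IsPOVM fun a => (A a)ᵀ :=
  ⟨fun a => (hA.1 a).transpose, by rw [← Matrix.transpose_sum, hA.2, Matrix.transpose_one]⟩

theorem winProb_projGame {I O : Type} [Fintype I] [DecidableEq I] [Fintype O] [DecidableEq O]
    (G : NonlocalGame I I O O) {dA dB : ℕ} (A : I × I → O × O → Matrix (Fin dA) (Fin dA) ℂ)
    (B : I × Bool → O → Matrix (Fin dB) (Fin dB) ℂ) (M : Matrix (Fin dA) (Fin dB) ℂ) :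
    winProb (projGame G) A B M = ∑ x, ∑ y, G.prob x y * ((∑ a, ∑ b,
      if G.D x y a b then ((B (x, false) a)ᵀ * (Mᴴ * A (x, y) (a, b) * M)).trace.re +
        ((B (y, true) b)ᵀ * (Mᴴ * A (x, y) (a, b) * M)).trace.re else 0) / 2) := by
  have hcell : ∀ x y a b,
      (if G.D x y a b then ((B (x, false) a)ᵀ * (Mᴴ * A (x, y) (a, b) * M)).trace.re +
        ((B (y, true) b)ᵀ * (Mᴴ * A (x, y) (a, b) * M)).trace.re else 0) =
      (if G.D x y a b then (Mᴴ * A (x, y) (a, b) * M * (B (x, false) a)ᵀ).trace.re else 0) +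
      (if G.D x y a b then (Mᴴ * A (x, y) (a, b) * M * (B (y, true) b)ᵀ).trace.re else 0) := by
    intro x y a b
    rw [Matrix.trace_mul_comm, Matrix.trace_mul_comm (B (y, true) b)ᵀ]
    split_ifs <;> simp
  simp only [hcell, winProb, projGame, Fintype.sum_prod_type, Fintype.sum_bool]
  refine Finset.sum_congr rfl fun x _ => Finset.sum_congr rfl fun y _ => ?_
  simp [Finset.sum_add_distrib, ite_and]
  ring

open scoped MatrixOrder in
theorem exists_posSemidef_mul_self_eq {n : Type*} [Fintype n] [DecidableEq n]
    {A : Matrix n n ℂ} (hA : A.PosSemidef) : ∃ σ : Matrix n n ℂ, σ.PosSemidef ∧ σ * σ = A :=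
  ⟨CFC.sqrt A, (CFC.sqrt_nonneg A).posSemidef, CFC.sqrt_mul_sqrt_self A hA.nonneg⟩

theorem two_mul_sq_winProb_projGame_le {I O : Type} [Fintype I] [DecidableEq I]
    [Fintype O] [DecidableEq O] {G : NonlocalGame I I O O} (hG : IsDist G.prob) {dA dB : ℕ}
    {A : I × I → O × O → Matrix (Fin dA) (Fin dA) ℂ}
    {B : I × Bool → O → Matrix (Fin dB) (Fin dB) ℂ} {M : Matrix (Fin dA) (Fin dB) ℂ}
    (hA : ∀ x, IsPOVM (A x)) (hB : ∀ y, IsPOVM (B y)) (hM : (Mᴴ * M).trace = 1) :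
    2 * winProb (projGame G) A B M ^ 2 ≤ 1 + qValue G := by
  obtain ⟨σ, hσ, hσM⟩ :=
    exists_posSemidef_mul_self_eq (Matrix.posSemidef_conjTranspose_mul_self M)
  have hσ1 : tr4 1 σ 1 σ = 1 := by simp [tr4, hσM, hM]
  have hle := winProb_le_qValue hG (A := fun x a => (B (x, false) a)ᵀ)
    (B := fun y => B (y, true)) (M := σ) (fun x => (hB (x, false)).transpose)
    (fun y => hB (y, true)) (by rw [hσ.1.eq, hσM, hM])
  set μ := winProb (projGame G) A B M
  have hpair : ∀ x y, G.prob x y * (2 * μ * ∑ a, ∑ b,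
      if G.D x y a b then ((B (x, false) a)ᵀ * (Mᴴ * A (x, y) (a, b) * M)).trace.re +
        ((B (y, true) b)ᵀ * (Mᴴ * A (x, y) (a, b) * M)).trace.re else 0) ≤
      G.prob x y * (1 + (∑ a, ∑ b, if G.D x y a b then
        (σᴴ * (B (x, false) a)ᵀ * σ * (B (y, true) b)ᵀ).trace.re else 0) + 2 * μ ^ 2) := by
    intro x y
    have h := two_mul_sum_trace_le (D := G.D x y) (hB (x, false)).transpose.1
      (hB (x, false)).transpose.2 (hB (y, true)).transpose.1 (hB (y, true)).transpose.2 hσ hσ1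
      (fun a b => ((hA (x, y)).1 (a, b)).conjTranspose_mul_mul_same M) (by
        have := (hA (x, y)).2
        rw [Fintype.sum_prod_type] at this
        simp only [← Matrix.sum_mul, ← Matrix.mul_sum, this, hσM, Matrix.mul_one]) μ
    simp only [← tr4_rotate σ] at h
    rw [hσ.1.eq]
    exact mul_le_mul_of_nonneg_left h (hG.1 x y)
  have hsum := Finset.sum_le_sum fun x (_ : x ∈ Finset.univ) =>
    Finset.sum_le_sum fun y (_ : y ∈ Finset.univ) => hpair x y
  have hL : ∑ x, ∑ y, G.prob x y * (2 * μ * ∑ a, ∑ b,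
      if G.D x y a b then ((B (x, false) a)ᵀ * (Mᴴ * A (x, y) (a, b) * M)).trace.re +
        ((B (y, true) b)ᵀ * (Mᴴ * A (x, y) (a, b) * M)).trace.re else 0) = 4 * μ * μ := by
    refine Eq.trans ?_ (congrArg (4 * μ * ·) (winProb_projGame G A B M)).symm
    simp only [Finset.mul_sum (s := (Finset.univ : Finset I))]
    refine Finset.sum_congr rfl fun x _ => Finset.sum_congr rfl fun y _ => ?_
    ring
  have hR : ∑ x, ∑ y, G.prob x y * (1 + (∑ a, ∑ b, if G.D x y a b then
        (σᴴ * (B (x, false) a)ᵀ * σ * (B (y, true) b)ᵀ).trace.re else 0) + 2 * μ ^ 2) =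
      1 + winProb G (fun x a => (B (x, false) a)ᵀ) (fun y => B (y, true)) σ + 2 * μ ^ 2 := by
    simp only [mul_add, Finset.sum_add_distrib, ← Finset.sum_mul, hG.2, winProb]
    ring
  rw [hL, hR] at hsum
  linarith

/-- `ω_q(G^proj) ≤ √((1 + ω_q(G))/2)`. -/
theorem stmt_13 {I O : Type} [Fintype I] [DecidableEq I] [Fintype O] [DecidableEq O]
    (G : NonlocalGame I I O O) (hG : IsDist G.prob) :
    qValue (projGame G) ≤ Real.sqrt ((1 + qValue G) / 2) := by
  refine Real.sSup_le ?_ (Real.sqrt_nonneg _)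
  rintro w ⟨dA, dB, A, B, M, hA, hB, hM, rfl⟩
  refine Real.le_sqrt_of_sq_le ?_
  linarith [two_mul_sq_winProb_projGame_le hG hA hB hM]
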